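/- Fix an integer r ≥ 2, real a ≥ 1 and λ > 0, and define the polynomial Q(x) = (1+λ+a^r+λx^r)·((1+λ)ax + λa + x)^r − ((1+λ)a^r x^r + λ a^r + x^r)·(1+λ+a+λx)^r. Then Q(a) = 0 and Q'(a) = 0, i.e., x = a is a (at least) double root of Q. -/

import Mathlib

/-- The mixture polynomial
`Q(x) = (1+λ+a^r+λx^r)((1+λ)ax+λa+x)^r − ((1+λ)a^r x^r+λa^r+x^r)(1+λ+a+λx)^r`
has `x = a` as a root of multiplicity at least two: `Q(a) = 0` and `Q'(a) = 0`. -/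
theorem stmt_9 (r : ℕ) (hr : 2 ≤ r) (a L : ℝ) (ha : 1 ≤ a) (hL : 0 < L)
    (Q : ℝ → ℝ)
    (hQ : ∀ x : ℝ, Q x =
      (1 + L + a ^ r + L * x ^ r) * ((1 + L) * a * x + L * a + x) ^ r -
      ((1 + L) * a ^ r * x ^ r + L * a ^ r + x ^ r) * (1 + L + a + L * x) ^ r) :
    Q a = 0 ∧ deriv Q a = 0 := by
  obtain ⟨n, rfl⟩ : ∃ n, r = n + 1 := ⟨r - 1, by omega⟩
  have e1 : (1 + L) * a * a + L * a + a = a * ((1 + L) * (1 + a)) := by ring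
  have e2 : 1 + L + a + L * a = (1 + L) * (1 + a) := by ring
  constructor
  · rw [hQ, e1, e2, mul_pow a]
    ring
  · have hp : HasDerivAt (fun x : ℝ => x ^ (n + 1)) (((n + 1 : ℕ) : ℝ) * a ^ n) a := by
      simpa using hasDerivAt_pow (n + 1) a
    have hid := hasDerivAt_id' a
    have h1 := (hp.const_mul L).const_add (1 + L + a ^ (n + 1))
    have h2 := (((hid.const_mul ((1 + L) * a)).add_const (L * a)).fun_add hid).fun_pow (n + 1)
    have h3 := ((hp.const_mul ((1 + L) * a ^ (n + 1))).add_const (L * a ^ (n + 1))).fun_add hp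
    have h4 := ((hid.const_mul L).const_add (1 + L + a)).fun_pow (n + 1)
    have h := (h1.fun_mul h2).fun_sub (h3.fun_mul h4)
    rw [funext hQ, h.deriv, e1, e2]
    simp only [Nat.add_sub_cancel, mul_pow a]
    generalize (1 + L) * (1 + a) = c at *
    simp only [pow_succ]
    generalize c ^ n = B
    generalize a ^ n = p
    subst_vars
    push_cast
    ring
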